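/- Let R be a Noetherian local ring and A a Noetherian local module-finite R-algebra such that R is a direct summand of A as an R-module. If A is a sequentially Cohen-Macaulay local ring, then R is a sequentially Cohen-Macaulay local ring. -/

import Mathlib

open IsLocalRing

/-- The (Krull) dimension of a module: `dim_R M = dim (R / ann_R M)`;
the zero module has dimension `⊥` (i.e. `-∞`). -/
noncomputable def moduleDim (R : Type*) [CommRing R] (M : Type*) [AddCommGroup M]
    [Module R M] : WithBot ℕ∞ :=
  ringKrullDim (R ⧸ Module.annihilator R M)

/-- `dimLe d n` means `d ≤ n` where `n : ℤ` and `d` is a dimension in `WithBot ℕ∞`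
(so for `n < 0` this means `d = ⊥`, i.e. the module is zero). -/
def dimLe (d : WithBot ℕ∞) (n : ℤ) : Prop :=
  if 0 ≤ n then d ≤ ((n.toNat : ℕ∞) : WithBot ℕ∞) else d = ⊥

/-- The depth of a module over a Noetherian local ring: the supremum of lengths of
regular sequences on `M` contained in the maximal ideal. -/
noncomputable def moduleDepth (R : Type*) [CommRing R] [IsLocalRing R] (M : Type*)
    [AddCommGroup M] [Module R M] : ℕ∞ :=
  sSup {n : ℕ∞ | ∃ rs : List R, (rs.length : ℕ∞) = n ∧
    (∀ r ∈ rs, r ∈ maximalIdeal R) ∧ RingTheory.Sequence.IsRegular M rs}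

/-- A module over a Noetherian local ring is Cohen-Macaulay if it is zero or
`depth M = dim M`. -/
def IsCMModule (R : Type*) [CommRing R] [IsLocalRing R] (M : Type*) [AddCommGroup M]
    [Module R M] : Prop :=
  Nontrivial M → (moduleDepth R M : WithBot ℕ∞) = moduleDim R M

/-- A module over a (not necessarily local) commutative ring is Cohen-Macaulay if all its
localizations at primes are Cohen-Macaulay. -/
def IsCMModuleGen (R : Type*) [CommRing R] (M : Type*) [AddCommGroup M] [Module R M] : Prop :=
  ∀ (P : Ideal R) [P.IsPrime],
    IsCMModule (Localization.AtPrime P) (LocalizedModule P.primeCompl M)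

/-- `D : Fin (ℓ+1) → Submodule R M` is the dimension filtration of `M`:
`D 0 = 0`, `D ℓ = M`, the chain is strictly increasing, each `D i` (for `i ≥ 1`) is the
largest submodule of its dimension, and every nonzero submodule which is largest among
submodules of dimension at most its own dimension occurs in the chain. -/
def IsDimFiltration (R : Type*) [CommRing R] (M : Type*) [AddCommGroup M] [Module R M]
    (ℓ : ℕ) (D : Fin (ℓ + 1) → Submodule R M) : Prop :=
  D 0 = ⊥ ∧ D (Fin.last ℓ) = ⊤ ∧ StrictMono D ∧
  (∀ i : Fin ℓ, IsGreatest
    {N : Submodule R M | moduleDim R ↥N ≤ moduleDim R ↥(D i.succ)} (D i.succ)) ∧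
  (∀ N : Submodule R M, N ≠ ⊥ →
    IsGreatest {N' : Submodule R M | moduleDim R ↥N' ≤ moduleDim R ↥N} N → ∃ i, D i = N)

/-- A module over a local ring is sequentially Cohen-Macaulay if the consecutive quotients
of its dimension filtration are Cohen-Macaulay. -/
def IsSeqCM (R : Type*) [CommRing R] [IsLocalRing R] (M : Type*) [AddCommGroup M]
    [Module R M] : Prop :=
  ∃ (ℓ : ℕ) (D : Fin (ℓ + 1) → Submodule R M), IsDimFiltration R M ℓ D ∧
    ∀ i : Fin ℓ, IsCMModule R
      (↥(D i.succ) ⧸ (D i.castSucc).comap (D i.succ).subtype)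

/-- Sequentially Cohen-Macaulay over a not necessarily local ring. -/
def IsSeqCMGen (R : Type*) [CommRing R] (M : Type*) [AddCommGroup M] [Module R M] : Prop :=
  ∃ (ℓ : ℕ) (D : Fin (ℓ + 1) → Submodule R M), IsDimFiltration R M ℓ D ∧
    ∀ i : Fin ℓ, IsCMModuleGen R
      (↥(D i.succ) ⧸ (D i.castSucc).comap (D i.succ).subtype)

/-- A local ring is sequentially Cohen-Macaulay if it is so as a module over itself. -/
def IsSeqCMRing (R : Type*) [CommRing R] [IsLocalRing R] : Prop := IsSeqCM R R
universe v

theorem ringKrullDim_eq_of_isIntegral_of_injective {R S : Type*} [CommRing R] [CommRing S]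
    (f : R →+* S) (hf : f.IsIntegral) (hinj : Function.Injective f) :
    ringKrullDim S = ringKrullDim R := by
  algebraize [f]
  have : FaithfulSMul R S := (faithfulSMul_iff_algebraMap_injective R S).mpr hinj
  refine le_antisymm (Order.krullDim_le_of_strictMono (PrimeSpectrum.comap (algebraMap R S)) ?_) ?_
  · intro P Q hPQ
    have := Q.2
    have := P.2
    exact Ideal.IsIntegral.comap_lt_comap (R := R) (I := P.asIdeal) (J := Q.asIdeal) hPQ
  · refine iSup_le fun l ↦ ?_
    obtain ⟨P, -, hP, hPl⟩ := Ideal.exists_ideal_over_prime_of_isIntegral (S := S)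
      l.head.asIdeal ⊥ (by simp [← RingHom.ker_eq_comap_bot])
    have : P.LiesOver (RelSeries.head l).asIdeal := ⟨hPl.symm⟩
    obtain ⟨L, hL, -⟩ := Ideal.exists_ltSeries_of_hasGoingUp l P
    rw [← hL]
    exact Order.LTSeries.length_le_krullDim L

theorem moduleDim_le_of_annihilator_le {R M N : Type*} [CommRing R] [AddCommGroup M]
    [Module R M] [AddCommGroup N] [Module R N]
    (h : Module.annihilator R M ≤ Module.annihilator R N) : moduleDim R N ≤ moduleDim R M :=
  ringKrullDim_le_of_surjective (Ideal.Quotient.factor h) (Ideal.Quotient.factor_surjective h)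

theorem moduleDim_le_of_injective {R M N : Type*} [CommRing R] [AddCommGroup M]
    [Module R M] [AddCommGroup N] [Module R N] (f : M →ₗ[R] N) (hf : Function.Injective f) :
    moduleDim R M ≤ moduleDim R N :=
  moduleDim_le_of_annihilator_le (f.annihilator_le_of_injective hf)

theorem moduleDim_eq_of_isIntegral (R A M : Type*) [CommRing R] [CommRing A] [Algebra R A]
    [Algebra.IsIntegral R A] [AddCommGroup M] [Module R M] [Module A M] [IsScalarTower R A M] :
    moduleDim A M = moduleDim R M := by
  have h : Module.annihilator R M = (Module.annihilator A M).comap (algebraMap R A) := by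
    ext r
    simp [Module.mem_annihilator, Ideal.mem_comap]
  refine ringKrullDim_eq_of_isIntegral_of_injective
    (Ideal.quotientMap (Module.annihilator A M) (algebraMap R A) h.le) ?_
    (Ideal.quotientMap_injective' h.ge)
  refine RingHom.IsIntegral.tower_top (Ideal.Quotient.mk _) _ ?_
  rw [Ideal.quotientMap_comp_mk]
  exact (algebraMap_isIntegral_iff.mpr inferInstance).trans _ _
    (RingHom.isIntegral_of_surjective _ Ideal.Quotient.mk_surjective)

theorem ringKrullDim_quotient_inf_le {R : Type*} [CommRing R] {I J : Ideal R}
    {d : WithBot ℕ∞} (hI : ringKrullDim (R ⧸ I) ≤ d) (hJ : ringKrullDim (R ⧸ J) ≤ d) :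
    ringKrullDim (R ⧸ (I ⊓ J)) ≤ d := by
  rw [ringKrullDim_quotient] at *
  refine iSup_le fun l ↦ ?_
  have aux (K : Ideal R) (hK : Order.krullDim (PrimeSpectrum.zeroLocus (K : Set R)) ≤ d)
      (h : K ≤ l.head.1.asIdeal) : (l.length : WithBot ℕ∞) ≤ d := by
    let l' : LTSeries (PrimeSpectrum.zeroLocus (K : Set R)) :=
      { length := l.length
        toFun := fun i ↦ ⟨(l i).1, h.trans (l.head_le i)⟩
        step := fun i ↦ l.step i }
    exact (Order.LTSeries.length_le_krullDim l').trans hK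
  have hl : I ⊓ J ≤ l.head.1.asIdeal := l.head.2
  exact (l.head.1.2.inf_le.mp hl).elim (aux I hI) (aux J hJ)

theorem moduleDim_sup_le {R M : Type*} [CommRing R] [AddCommGroup M] [Module R M]
    {N₁ N₂ : Submodule R M} {d : WithBot ℕ∞} (h₁ : moduleDim R N₁ ≤ d) (h₂ : moduleDim R N₂ ≤ d) :
    moduleDim R ↥(N₁ ⊔ N₂) ≤ d := by
  refine le_trans ?_ (ringKrullDim_quotient_inf_le h₁ h₂)
  have h : N₁.annihilator ⊓ N₂.annihilator ≤ (N₁ ⊔ N₂).annihilator := by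
    intro r hr
    rw [Submodule.mem_annihilator]
    intro x hx
    obtain ⟨a, ha, b, hb, rfl⟩ := Submodule.mem_sup.mp hx
    rw [smul_add, Submodule.mem_annihilator.mp hr.1 a ha, Submodule.mem_annihilator.mp hr.2 b hb,
      add_zero]
  exact ringKrullDim_le_of_surjective (Ideal.Quotient.factor h) (Ideal.Quotient.factor_surjective h)

theorem exists_isGreatest_moduleDim_le (R M : Type*) [CommRing R] [AddCommGroup M] [Module R M]
    [IsNoetherian R M] (d : WithBot ℕ∞) :
    ∃ N, IsGreatest {N : Submodule R M | moduleDim R N ≤ d} N := by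
  have hne : {N : Submodule R M | moduleDim R N ≤ d}.Nonempty :=
    ⟨⊥, by
      have : Subsingleton (R ⧸ Module.annihilator R (⊥ : Submodule R M)) := by
        rw [Ideal.Quotient.subsingleton_iff, Module.annihilator_eq_top_iff]
        infer_instance
      simp [moduleDim, ringKrullDim_eq_bot_of_subsingleton]⟩
  obtain ⟨N, hN, hmax⟩ := WellFounded.has_min
    (wellFounded_gt : WellFounded ((· > ·) : Submodule R M → _ → Prop)) _ hne
  refine ⟨N, hN, fun N' hN' ↦ ?_⟩
  by_contra h
  exact hmax (N ⊔ N') (moduleDim_sup_le hN hN') (left_lt_sup.mpr h)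

theorem moduleDepth_le_moduleDim (R M : Type*) [CommRing R] [IsNoetherianRing R] [IsLocalRing R]
    [AddCommGroup M] [Module R M] [Module.Finite R M] [Nontrivial M] :
    (moduleDepth R M : WithBot ℕ∞) ≤ moduleDim R M := by
  have hdim : moduleDim R M = Module.supportDim R M :=
    (Module.supportDim_eq_ringKrullDim_quotient_annihilator R M).symm
  obtain ⟨e, he⟩ := WithBot.ne_bot_iff_exists.mp (Module.supportDim_ne_bot_of_nontrivial R M)
  rw [hdim, ← he, WithBot.coe_le_coe]
  refine sSup_le ?_
  rintro _ ⟨rs, rfl, -, hrs⟩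
  rw [← WithBot.coe_le_coe, he, ← Module.supportDim_add_length_eq_supportDim_of_isRegular rs hrs]
  have := hrs.quot_ofList_smul_nontrivial ⊤
  have h0 : (0 : WithBot ℕ∞) ≤
      Module.supportDim R (M ⧸ Ideal.ofList rs • (⊤ : Submodule R M)) := by
    obtain ⟨e, he⟩ := WithBot.ne_bot_iff_exists.mp (Module.supportDim_ne_bot_of_nontrivial R
      (M ⧸ Ideal.ofList rs • (⊤ : Submodule R M)))
    rw [← he]
    exact_mod_cast (zero_le : 0 ≤ e)
  exact le_add_of_nonneg_left h0

theorem exists_strictMono_chain {α : Type*} [PartialOrder α] (ℓ : ℕ) (E : Fin (ℓ + 1) → α)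
    (hE : Monotone E) : ∃ (k : ℕ) (F : Fin (k + 1) → α), StrictMono F ∧ F 0 = E 0 ∧
      F (Fin.last k) = E (Fin.last ℓ) ∧ (∀ i, ∃ j, F j = E i) ∧
      ∀ i : Fin k, ∃ j : Fin ℓ, F i.castSucc = E j.castSucc ∧ F i.succ = E j.succ := by
  induction ℓ with
  | zero => exact ⟨0, E, fun i j h ↦ by omega, rfl, rfl, fun i ↦ ⟨i, rfl⟩, fun i ↦ i.elim0⟩
  | succ ℓ ih =>
    obtain ⟨k, F, hF, h0, hl, hr, hs⟩ := ih (E ∘ Fin.castSucc) 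
      (hE.comp (Fin.strictMono_castSucc).monotone)
    by_cases h : E (Fin.last ℓ).castSucc = E (Fin.last (ℓ + 1))
    · refine ⟨k, F, hF, h0, hl.trans h, fun i ↦ ?_, fun i ↦ ?_⟩
      · induction i using Fin.lastCases with
        | last => exact ⟨_, hl.trans h⟩
        | cast i => exact hr i
      · obtain ⟨j, hj⟩ := hs i
        exact ⟨j.castSucc, hj⟩
    · have hlt : E (Fin.last ℓ).castSucc < E (Fin.last (ℓ + 1)) :=
        lt_of_le_of_ne (hE (Fin.le_last _)) h
      refine ⟨k + 1, Fin.snoc F (E (Fin.last _)), ?_, ?_, by simp, fun i ↦ ?_, fun i ↦ ?_⟩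
      · refine Fin.strictMono_iff_lt_succ.mpr fun i ↦ ?_
        induction i using Fin.lastCases with
        | last => simpa [hl] using hlt
        | cast i =>
          rw [← Fin.castSucc_succ, Fin.snoc_castSucc, Fin.snoc_castSucc]
          exact hF i.castSucc_lt_succ
      · rw [← Fin.castSucc_zero, Fin.snoc_castSucc, h0]
        rfl
      · induction i using Fin.lastCases with
        | last => exact ⟨Fin.last _, by simp⟩
        | cast i =>
          obtain ⟨j, hj⟩ := hr i
          exact ⟨j.castSucc, by simpa using hj⟩
      · induction i using Fin.lastCases with
        | last => exact ⟨Fin.last _, by simpa using hl, by simp⟩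
        | cast i =>
          obtain ⟨j, hj, hj'⟩ := hs i
          refine ⟨j.castSucc, by simpa using hj, ?_⟩
          rw [← Fin.castSucc_succ, Fin.snoc_castSucc, hj']
          rfl

section Depth

open CategoryTheory Abelian Limits RingTheory.Sequence

theorem exists_isRegular_quotSMulTop {A : Type*} [CommRing A] [IsNoetherianRing A]
    [IsLocalRing A] {M : Type v} [Small.{v} A] [AddCommGroup M] [Module A M] [Module.Finite A M]
    [Nontrivial M] {x : A} (hx : x ∈ maximalIdeal A) (hxM : IsSMulRegular M x) {rs : List A}
    (hrs : ∀ r ∈ rs, r ∈ maximalIdeal A) (hreg : IsRegular M rs) {n : ℕ}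
    (hn : rs.length = n + 1) :
    ∃ rs' : List A, rs'.length = n ∧ (∀ r ∈ rs', r ∈ maximalIdeal A) ∧
      IsRegular (QuotSMulTop x M) rs' := by
  have lt (L : Type v) [AddCommGroup L] [Module A L] [Module.Finite A L] [Nontrivial L] :
      maximalIdeal A • (⊤ : Submodule A L) < ⊤ :=
    (Submodule.top_ne_ideal_smul_of_le_jacobson_annihilator
      (maximalIdeal_le_jacobson _)).symm.lt_top
  have := nontrivial_quotSMulTop_of_mem_maximalIdeal M hx
  let k := ModuleCat.of A (Shrink.{v} (A ⧸ maximalIdeal A))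
  have hk : Module.support A k = PrimeSpectrum.zeroLocus (maximalIdeal A) := by
    rw [(Shrink.linearEquiv A _).support_eq, Module.support_eq_zeroLocus,
      Ideal.annihilator_quotient]
  have : Module.Finite A k := Module.Finite.equiv (Shrink.linearEquiv A (A ⧸ maximalIdeal A)).symm
  have hext := ModuleCat.subsingleton_ext_of_exists_isRegular (maximalIdeal A) k hk.subset
    (ModuleCat.of A M) (lt M) rs hrs hreg
  refine ModuleCat.exists_isRegular_of_exists_subsingleton_ext (maximalIdeal A) n
    (ModuleCat.of A (QuotSMulTop x M)) (lt (QuotSMulTop x M)) k hk fun i hi ↦ ?_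
  have zero1 := AddCommGrpCat.isZero_of_iff_subsingleton.mpr (hext i (by omega))
  have zero2 := AddCommGrpCat.isZero_of_iff_subsingleton.mpr (hext (i + 1) (by omega))
  exact AddCommGrpCat.subsingleton_of_isZero <| ShortComplex.Exact.isZero_of_both_zeros
    (Ext.covariant_sequence_exact₃' k
      (IsSMulRegular.smulShortComplex_shortExact (M := ModuleCat.of A M) hxM) i (i + 1) rfl)
    (zero1.eq_zero_of_src _) (zero2.eq_zero_of_tgt _)

theorem exists_pow_mem_map_maximalIdeal (R : Type*) {A : Type*} [CommRing R] [IsLocalRing R]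
    [CommRing A] [IsLocalRing A] [Algebra R A] [Algebra.IsIntegral R A] {y : A}
    (hy : y ∈ maximalIdeal A) : ∃ k : ℕ, y ^ k ∈ (maximalIdeal R).map (algebraMap R A) := by
  rw [← Ideal.mem_radical_iff, Ideal.radical_eq_sInf, Submodule.mem_sInf]
  rintro J ⟨hJ, hJp⟩
  have hcomap : Ideal.comap (algebraMap R A) J = maximalIdeal R :=
    ((maximalIdeal.isMaximal R).eq_of_le (Ideal.comap_ne_top _ hJp.ne_top)
      (Ideal.map_le_iff_le_comap.mp hJ)).symm
  have : Ideal.IsMaximal J := Ideal.isMaximal_of_isIntegral_of_isMaximal_comap (R := R) J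
    (hcomap ▸ maximalIdeal.isMaximal R)
  rwa [eq_maximalIdeal this]

theorem exists_isSMulRegular_mem_maximalIdeal (R : Type*) {A M : Type*} [CommRing R]
    [IsNoetherianRing R] [IsLocalRing R] [CommRing A] [IsLocalRing A] [Algebra R A]
    [Module.Finite R A] [AddCommGroup M] [Module R M] [Module A M] [IsScalarTower R A M]
    [Module.Finite A M] {y : A} (hy : y ∈ maximalIdeal A) (hreg : IsSMulRegular M y) :
    ∃ r ∈ maximalIdeal R, IsSMulRegular M r := by
  have := Module.Finite.trans (R := R) A M
  obtain ⟨k, hk⟩ := exists_pow_mem_map_maximalIdeal R hy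
  have hsub : Subsingleton ((R ⧸ maximalIdeal R) →ₗ[R] M) := by
    refine subsingleton_of_forall_eq 0 fun f ↦ ?_
    refine Submodule.linearMap_qext _ (LinearMap.ext_ring ?_)
    have hle : (maximalIdeal R).map (algebraMap R A) ≤
        (Submodule.span A {f (Submodule.Quotient.mk 1)}).annihilator := by
      refine Ideal.map_le_iff_le_comap.mpr fun r hr ↦ ?_
      rw [Ideal.mem_comap, Submodule.mem_annihilator_span_singleton, algebraMap_smul, ← map_smul,
        ← Submodule.Quotient.mk_smul, smul_eq_mul, mul_one,
        (Submodule.Quotient.mk_eq_zero _).mpr hr, map_zero]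
    exact (hreg.pow k).right_eq_zero_of_smul
      ((Submodule.mem_annihilator_span_singleton _ _).mp (hle hk))
  simpa [Ideal.annihilator_quotient] using IsSMulRegular.subsingleton_linearMap_iff.mp hsub

theorem exists_isWeaklyRegular_map_algebraMap (R : Type*) {A : Type*} [CommRing R]
    [IsNoetherianRing R] [IsLocalRing R] [CommRing A] [IsNoetherianRing A] [IsLocalRing A]
    [Algebra R A] [FaithfulSMul R A] [Module.Finite R A] [Small.{v} A] (n : ℕ)
    (M : Type v) [AddCommGroup M] [Module A M] [Module.Finite A M] [Nontrivial M] (rs : List A)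
    (hn : rs.length = n) (hrs : ∀ r ∈ rs, r ∈ maximalIdeal A) (hreg : IsRegular M rs) :
    ∃ ts : List R, ts.length = n ∧ (∀ t ∈ ts, t ∈ maximalIdeal R) ∧
      IsWeaklyRegular M (ts.map (algebraMap R A)) := by
  induction n generalizing M rs with
  | zero => exact ⟨[], rfl, by simp, by simp⟩
  | succ n ih =>
    obtain ⟨y, ys, rfl⟩ := List.exists_cons_of_length_eq_add_one hn
    let := Module.compHom M (algebraMap R A)
    have : IsScalarTower R A M := IsScalarTower.of_algebraMap_smul fun _ _ ↦ rfl
    obtain ⟨t, ht, htM⟩ := exists_isSMulRegular_mem_maximalIdeal R (hrs y List.mem_cons_self)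
      ((isRegular_cons_iff M y ys).mp hreg).1
    have ht' : algebraMap R A t ∈ maximalIdeal A := by
      rwa [mem_maximalIdeal, map_mem_nonunits_iff]
    have htM' : IsSMulRegular M (algebraMap R A t) := htM
    have := nontrivial_quotSMulTop_of_mem_maximalIdeal M ht'
    obtain ⟨rs', hlen, hmem, hreg'⟩ := exists_isRegular_quotSMulTop ht' htM' hrs hreg hn
    obtain ⟨ts, hts, htm, htr⟩ := ih (QuotSMulTop (algebraMap R A t) M) rs' hlen hmem hreg'
    refine ⟨t :: ts, by simp [hts], by simpa using ⟨ht, htm⟩, ?_⟩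
    exact (isWeaklyRegular_cons_iff M _ _).mpr ⟨htM', htr⟩

theorem isWeaklyRegular_of_leftInverse {R Q M : Type*} [CommRing R] [AddCommGroup Q] [Module R Q]
    [AddCommGroup M] [Module R M] {i : Q →ₗ[R] M} {p : M →ₗ[R] Q} (h : p.comp i = LinearMap.id)
    {rs : List R} (hrs : IsWeaklyRegular M rs) : IsWeaklyRegular Q rs := by
  refine ⟨fun j hj ↦ ?_⟩
  refine (hrs.1 j hj).of_injective (Submodule.mapQ _ _ i (Submodule.smul_top_le_comap_smul_top _ i)) ?_
  refine Function.LeftInverse.injective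
    (g := Submodule.mapQ _ _ p (Submodule.smul_top_le_comap_smul_top _ p)) fun q ↦ ?_
  obtain ⟨q, rfl⟩ := Submodule.mkQ_surjective _ q
  simpa using congrArg _ (LinearMap.congr_fun h q)

end Depth

theorem IsCMModule.of_leftInverse {R A : Type*} {M : Type v} [CommRing R]
    [IsNoetherianRing R] [IsLocalRing R] [CommRing A] [IsNoetherianRing A] [IsLocalRing A]
    [Algebra R A] [FaithfulSMul R A] [Module.Finite R A] [Small.{v} A] [AddCommGroup M]
    [Module R M] [Module A M] [IsScalarTower R A M] [Module.Finite A M] {Q : Type*}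
    [AddCommGroup Q] [Module R Q] {i : Q →ₗ[R] M} {p : M →ₗ[R] Q} (h : p.comp i = LinearMap.id)
    (hM : IsCMModule A M) : IsCMModule R Q := by
  intro hQ
  have hi : Function.Injective i :=
    Function.LeftInverse.injective (g := p) (LinearMap.congr_fun h)
  have hp : Function.Surjective p :=
    Function.RightInverse.surjective (g := i) (LinearMap.congr_fun h)
  have hMn : Nontrivial M := hi.nontrivial
  have := Module.Finite.trans (R := R) A M
  have := Module.Finite.of_surjective p hp
  refine le_antisymm (moduleDepth_le_moduleDim R Q) ?_
  refine (moduleDim_le_of_injective i hi).trans ?_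
  rw [← moduleDim_eq_of_isIntegral R A M, ← hM hMn, WithBot.coe_le_coe]
  refine sSup_le ?_
  rintro _ ⟨rs, rfl, hrs, hreg⟩
  obtain ⟨ts, hlen, hts, hreg'⟩ :=
    exists_isWeaklyRegular_map_algebraMap R rs.length M rs rfl hrs hreg
  refine le_sSup ⟨ts, by rw [hlen], hts, .of_isWeaklyRegular_of_mem_maximalIdeal _ hts ?_⟩
  exact isWeaklyRegular_of_leftInverse h
    ((RingTheory.Sequence.isWeaklyRegular_map_algebraMap_iff A M ts).mp hreg')

theorem moduleDim_map_le {R A : Type*} [CommRing R] [CommRing A] [Algebra R A]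
    [Algebra.IsIntegral R A] (N : Ideal R) :
    moduleDim A (N.map (algebraMap R A)) ≤ moduleDim R N := by
  rw [moduleDim_eq_of_isIntegral R A]
  refine moduleDim_le_of_annihilator_le fun r hr ↦ ?_
  rw [Module.mem_annihilator] at hr ⊢
  have hle : N.map (algebraMap R A) ≤ (Ideal.span {algebraMap R A r}).annihilator := by
    refine Ideal.map_le_iff_le_comap.mpr fun x hx ↦ ?_
    have : r * x = 0 := congrArg Subtype.val (hr ⟨x, hx⟩)
    rw [Ideal.mem_comap]
    refine (Submodule.mem_annihilator_span_singleton _ _).mpr ?_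
    rw [smul_eq_mul, ← map_mul, mul_comm, this, map_zero]
  rintro ⟨x, hx⟩
  have := (Submodule.mem_annihilator_span_singleton _ _).mp (hle hx)
  refine Subtype.ext ?_
  simpa [Algebra.smul_def, mul_comm] using this

theorem moduleDim_comap_le {R A : Type*} [CommRing R] [CommRing A] [Algebra R A]
    [Algebra.IsIntegral R A] [FaithfulSMul R A] (D : Ideal A) :
    moduleDim R (D.comap (algebraMap R A)) ≤ moduleDim A D := by
  rw [moduleDim_eq_of_isIntegral R A D]
  refine moduleDim_le_of_injective
    (((Algebra.linearMap R A).domRestrict (D.comap (algebraMap R A))).codRestrict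
      (D.restrictScalars R) fun x ↦ x.2) fun x y hxy ↦ ?_
  exact Subtype.ext (FaithfulSMul.algebraMap_injective R A (congrArg Subtype.val hxy))

theorem map_le_comap_of_isGreatest {R A : Type*} [CommRing R] [CommRing A] [Algebra R A]
    [Algebra.IsIntegral R A] {D : Ideal A}
    (hD : IsGreatest {N : Ideal A | moduleDim A N ≤ moduleDim A D} D) (π : A →ₗ[R] R) :
    (D.restrictScalars R).map π ≤ D.comap (algebraMap R A) := by
  refine Ideal.map_le_iff_le_comap.mp (hD.2 ((moduleDim_map_le _).trans ?_))
  rw [moduleDim_eq_of_isIntegral R A D]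
  exact moduleDim_le_of_annihilator_le <|
    LinearMap.annihilator_le_of_surjective (π.submoduleMap (D.restrictScalars R))
      (π.submoduleMap_surjective _)

/-- If `R` is a direct summand of `A` as an `R`-module and `A` is a
sequentially Cohen-Macaulay local ring, then so is `R`. -/
theorem stmt9 (R : Type*) [CommRing R] [IsNoetherianRing R] [IsLocalRing R]
    (A : Type*) [CommRing A] [IsNoetherianRing A] [IsLocalRing A]
    [Algebra R A] [Module.Finite R A]
    (π : A →ₗ[R] R) (hsplit : π.comp (Algebra.linearMap R A) = LinearMap.id)
    (hA : IsSeqCMRing A) :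
    IsSeqCMRing R := by
  obtain ⟨ℓ, D, ⟨hD0, hDl, hDmono, hDgr, hDex⟩, hDcm⟩ := hA
  have hπ (r : R) : π (algebraMap R A r) = r := LinearMap.congr_fun hsplit r
  have : FaithfulSMul R A :=
    (faithfulSMul_iff_algebraMap_injective R A).mpr (Function.LeftInverse.injective hπ)
  let E (i : Fin (ℓ + 1)) : Ideal R := Ideal.comap (algebraMap R A) (D i)
  have hE0 : E 0 = ⊥ := by
    change Ideal.comap (algebraMap R A) (D 0) = ⊥
    rw [hD0, ← RingHom.ker_eq_comap_bot, ← RingHom.injective_iff_ker_eq_bot]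
    exact FaithfulSMul.algebraMap_injective R A
  have hπE (i : Fin (ℓ + 1)) {a : A} (ha : a ∈ D i) : π a ∈ E i := by
    induction i using Fin.cases with
    | zero =>
      rw [hD0, Submodule.mem_bot] at ha
      simp [ha]
    | succ i => exact map_le_comap_of_isGreatest (hDgr i) π (Submodule.mem_map_of_mem ha)
  obtain ⟨k, F, hF, hF0, hFl, hFr, hFs⟩ := exists_strictMono_chain ℓ E
    fun i j hij ↦ Ideal.comap_mono (hDmono.monotone hij)
  refine ⟨k, F, ⟨hF0.trans hE0, ?_, hF, fun i ↦ ?_, fun N hN hNgr ↦ ?_⟩, fun i ↦ ?_⟩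
  · rw [hFl]
    change Ideal.comap (algebraMap R A) (D (Fin.last ℓ)) = ⊤
    rw [hDl, Ideal.comap_top]
  · obtain ⟨j, -, hj⟩ := hFs i
    rw [hj]
    refine ⟨le_refl (moduleDim R (E j.succ)), fun N hN ↦ Ideal.map_le_iff_le_comap.mp ?_⟩
    have hN : moduleDim R N ≤ moduleDim R (E j.succ) := hN
    exact (hDgr j).2 ((moduleDim_map_le N).trans (hN.trans (moduleDim_comap_le _)))
  · obtain ⟨B, hB, hBgr⟩ := exists_isGreatest_moduleDim_le A A (moduleDim R N)
    replace hB : moduleDim A B ≤ moduleDim R N := hB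
    replace hBgr (B' : Ideal A) (h : moduleDim A B' ≤ moduleDim R N) : B' ≤ B := hBgr h
    have hNB : N ≤ Ideal.comap (algebraMap R A) B :=
      Ideal.map_le_iff_le_comap.mp (hBgr _ (moduleDim_map_le N))
    have hBgr' : IsGreatest {N' : Ideal A | moduleDim A N' ≤ moduleDim A B} B :=
      ⟨le_refl (moduleDim A B), fun N' (hN' : moduleDim A N' ≤ moduleDim A B) ↦
        hBgr _ (hN'.trans hB)⟩
    have hB0 : B ≠ ⊥ := by
      rintro rfl
      rw [← hD0] at hNB
      exact hN (le_bot_iff.mp (hNB.trans hE0.le))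
    obtain ⟨i, rfl⟩ := hDex B hB0 hBgr'
    obtain ⟨j, hj⟩ := hFr i
    have hdim : moduleDim R (E i) ≤ moduleDim R N := (moduleDim_comap_le _).trans hB
    exact ⟨j, hj.trans (le_antisymm (hNgr.2 hdim) hNB)⟩
  · obtain ⟨j, hj, hj'⟩ := hFs i
    rw [hj, hj']
    let e := Submodule.Quotient.restrictScalarsEquiv R
      ((D j.castSucc).comap (D j.succ).subtype)
    let f : E j.succ →ₗ[R] D j.succ :=
      ((Algebra.linearMap R A).domRestrict (E j.succ)).codRestrict
        ((D j.succ).restrictScalars R) fun x ↦ x.2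
    let g : D j.succ →ₗ[R] E j.succ :=
      (π.domRestrict ((D j.succ).restrictScalars R)).codRestrict (E j.succ) fun x ↦ hπE _ x.2
    refine IsCMModule.of_leftInverse (i := e.toLinearMap.comp (Submodule.mapQ _ _ f ?_))
      (p := (Submodule.mapQ _ _ g ?_).comp e.symm.toLinearMap) ?_ (hDcm j)
    · exact fun x hx ↦ hx
    · exact fun x hx ↦ hπE _ hx
    · ext x
      refine congrArg (Submodule.Quotient.mk) (Subtype.ext (hπ x))
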